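/- arXiv:2203.08767 — 2 statements merged into one kernel-verified Lean document; each statement's English description precedes it below -/
import Mathlib

section
/- Fix 0 < R < Q and 0 < w < 1, set a = w/(πR²) and b = (1−w)/(π(Q²−R²)), assume a < b, and let μ be the measure on the Euclidean plane with density f with respect to 2-dimensional Lebesgue measure, where f(p) = a if ‖p‖ < R, f(p) = b if R ≤ ‖p‖ ≤ Q, and f(p) = 0 if ‖p‖ > Q. Suppose s ≥ (R + Q)/2, and let ν_s(c) = μ(B(p_c,s)) for c ∈ [0,Q]. Then ν_s is non-increasing on [0,Q]; in particular, ν_s attains its maximum over [0,Q] at c = 0. -/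
open Set MeasureTheory Metric

/-- The point `(c, 0)` in the Euclidean plane. -/
noncomputable def pc (c : ℝ) : EuclideanSpace ℝ (Fin 2) :=
  (WithLp.equiv 2 (Fin 2 → ℝ)).symm ![c, 0]

/-!
Slice the ball `B(c e, s)` by lines parallel to `e`: the line at distance `√(s² - h²)` from `ℝ e`
meets it in a window of half-width `h` centred at `c`. When the centre passes `t`, the window gains
the point `t + h` and loses `t - h`, so it suffices that the density at the front point is at most
the density at the back point, both taken on the sphere of radius `s` about `t e`. The back point is
the closer one to the origin, hence the inequality can only fail if the back point lies in the inner
disc and the front point in the outer ring. By the parallelogram law this forces `t < (Q - R) / 2`,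
and then the back point has norm at least `s - t > R`.

The pairing has to be made slice by slice and for every position `t` of the centre: the reflection
exchanging two balls `B(c e, s)` and `B(d e, s)` with `c < d` can carry points of `B(d e, s)` in the
outer ring into the inner disc.
-/

open scoped ENNReal NNReal

section SlidingWindow

theorem apply_le_apply_toIocMod {α : Type*} [Preorder α] {F : ℝ → α} {a p x : ℝ} (hp : 0 < p)
    (hF : ∀ z > a, F (z + p) ≤ F z) (hx : a < x) : F x ≤ F (toIocMod hp a x) := by
  have shift_le (n : ℕ) {z : ℝ} (hz : a < z) : F (z + n * p) ≤ F z := by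
    induction n with
    | zero => simp
    | succ n ih =>
      calc F (z + (n + 1 : ℕ) * p) = F (z + n * p + p) := by push_cast; ring_nf
        _ ≤ F (z + n * p) := hF _ (by nlinarith [mul_nonneg n.cast_nonneg hp.le])
        _ ≤ F z := ih
  obtain ⟨n, hn⟩ : ∃ n : ℕ, toIocDiv hp a x = n := Int.eq_ofNat_of_zero_le <| by
    by_contra! hneg
    have hle : (toIocDiv hp a x : ℝ) ≤ -1 := by exact_mod_cast Int.le_sub_one_of_lt hneg
    have hmod := toIocMod_le_right hp a x
    rw [← self_sub_toIocDiv_mul] at hmod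
    nlinarith
  calc F x = F (toIocMod hp a x + n * p) := by
        conv_lhs => rw [← toIocMod_add_toIocDiv_mul hp a x, hn, Int.cast_natCast]
    _ ≤ F (toIocMod hp a x) := shift_le n (left_lt_toIocMod hp a x)

theorem antitoneOn_setLIntegral_Ioc_add {F : ℝ → ℝ≥0∞} {r p : ℝ} (hp : 0 < p)
    (hF : ∀ z > r, F (z + p) ≤ F z) :
    AntitoneOn (fun a => ∫⁻ x in Ioc a (a + p), F x) (Ici r) := by
  intro a ha b _ hab
  -- Folding modulo `p` onto `(a, a + p]` avoids cancelling integrals that may be infinite.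
  calc ∫⁻ x in Ioc b (b + p), F x
      ≤ ∫⁻ x in Ioc b (b + p), F (toIocMod hp a x) :=
        setLIntegral_mono' measurableSet_Ioc fun x hx =>
          apply_le_apply_toIocMod hp (fun z hz => hF z (ha.trans_lt hz)) (hab.trans_lt hx.1)
    _ = ∫⁻ x in Ioc a (a + p), F (toIocMod hp a x) :=
        (isAddFundamentalDomain_Ioc hp b).setLIntegral_eq (isAddFundamentalDomain_Ioc hp a)
          (F ∘ toIocMod hp a) ((toIocMod_periodic hp a).comp F).map_vadd_zmultiples
    _ = ∫⁻ x in Ioc a (a + p), F x :=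
        setLIntegral_congr_fun measurableSet_Ioc fun x hx =>
          congrArg F ((toIocMod_eq_self hp).2 hx)

theorem antitoneOn_setLIntegral_Ioc_sub_add {F : ℝ → ℝ≥0∞} {r h : ℝ} (hh : 0 < h)
    (hF : ∀ t > r, F (t + h) ≤ F (t - h)) :
    AntitoneOn (fun c => ∫⁻ x in Ioc (c - h) (c + h), F x) (Ici r) := by
  have hshift : ∀ z > r - h, F (z + 2 * h) ≤ F z := fun z hz => by
    simpa [add_assoc, two_mul] using hF (z + h) (sub_lt_iff_lt_add.1 hz)
  intro c hc d hd hcd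
  simpa [two_mul] using antitoneOn_setLIntegral_Ioc_add (mul_pos two_pos hh) hshift
    (sub_le_sub_right hc h) (sub_le_sub_right hd h) (sub_le_sub_right hcd h)

end SlidingWindow

section InnerProductSpace

variable {E : Type*} [NormedAddCommGroup E] [InnerProductSpace ℝ E] {e : E}

theorem norm_smul_add_sq_of_mem_orthogonal (he : ‖e‖ = 1) (x : ℝ) {y : E} (hy : y ∈ (ℝ ∙ e)ᗮ) :
    ‖x • e + y‖ ^ 2 = x ^ 2 + ‖y‖ ^ 2 := by
  have horth : inner ℝ (x • e) y = 0 := by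
    rw [real_inner_smul_left, Submodule.mem_orthogonal_singleton_iff_inner_right.1 hy, mul_zero]
  rw [norm_add_sq_real, horth, norm_smul, he]
  simp

theorem smul_add_mem_ball_smul_iff (he : ‖e‖ = 1) {s : ℝ} (hs : 0 ≤ s) (c x : ℝ) {y : E}
    (hy : y ∈ (ℝ ∙ e)ᗮ) :
    x • e + y ∈ ball (c • e) s ↔
      x ∈ Ioo (c - √(s ^ 2 - ‖y‖ ^ 2)) (c + √(s ^ 2 - ‖y‖ ^ 2)) := by
  have hsub : x • e + y - c • e = (x - c) • e + y := by module
  rw [mem_ball, dist_eq_norm, hsub, ← sq_lt_sq₀ (norm_nonneg _) hs,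
    norm_smul_add_sq_of_mem_orthogonal he _ hy, ← lt_sub_iff_add_lt, Real.sq_lt, mem_Ioo,
    neg_lt_sub_iff_lt_add, sub_lt_iff_lt_add', sub_lt_iff_lt_add, add_comm x]

theorem lintegral_indicator_ball_smul_line (he : ‖e‖ = 1) {s : ℝ} (hs : 0 ≤ s) (c : ℝ)
    {y : E} (hy : y ∈ (ℝ ∙ e)ᗮ) (f : E → ℝ≥0∞) :
    ∫⁻ x : ℝ, (ball (c • e) s).indicator f (x • e + y) =
      ∫⁻ x in Ioc (c - √(s ^ 2 - ‖y‖ ^ 2)) (c + √(s ^ 2 - ‖y‖ ^ 2)), f (x • e + y) := by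
  rw [← setLIntegral_congr Ioo_ae_eq_Ioc, ← lintegral_indicator measurableSet_Ioo]
  exact lintegral_congr fun x =>
    indicator_eq_indicator (smul_add_mem_ball_smul_iff he hs c x hy) rfl

variable [FiniteDimensional ℝ E] [MeasurableSpace E] [BorelSpace E]

theorem lintegral_eq_lintegral_orthogonal_line (he : ‖e‖ = 1) {f : E → ℝ≥0∞}
    (hf : Measurable f) :
    ∫⁻ p, f p = ∫⁻ y : (ℝ ∙ e)ᗮ, ∫⁻ x : ℝ, f (x • e + (y : E)) := by
  have hsplit : MeasurePreserving fun z : (ℝ ∙ e) × (ℝ ∙ e)ᗮ => (z.1 : E) + z.2 :=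
    (ℝ ∙ e).orthogonalDecomposition.symm.measurePreserving.comp (WithLp.volume_preserving_toLp _ _)
  have hline : MeasurePreserving fun z : ℝ × (ℝ ∙ e)ᗮ => z.1 • e + (z.2 : E) :=
    hsplit.comp ((LinearIsometryEquiv.toSpanUnitSingleton e he).measurePreserving.prod (.id _))
  rw [← hline.lintegral_comp hf]
  exact lintegral_prod_symm _ (hf.comp hline.measurable).aemeasurable

theorem antitoneOn_setLIntegral_ball_smul (he : ‖e‖ = 1) {f : E → ℝ≥0∞} (hf : Measurable f)
    {r s : ℝ}
    (hfs : ∀ t > r, ∀ h > 0, ∀ y ∈ (ℝ ∙ e)ᗮ, h ^ 2 + ‖y‖ ^ 2 = s ^ 2 →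
      f ((t + h) • e + y) ≤ f ((t - h) • e + y)) :
    AntitoneOn (fun c : ℝ => ∫⁻ p in ball (c • e) s, f p) (Ici r) := by
  rcases lt_or_ge s 0 with hs | hs
  · simp [ball_eq_empty.2 hs.le, antitoneOn_const]
  have lintegral_slices (c : ℝ) : ∫⁻ p in ball (c • e) s, f p = ∫⁻ y : (ℝ ∙ e)ᗮ,
      ∫⁻ x in Ioc (c - √(s ^ 2 - ‖(y : E)‖ ^ 2)) (c + √(s ^ 2 - ‖(y : E)‖ ^ 2)),
        f (x • e + (y : E)) := by
    rw [← lintegral_indicator measurableSet_ball,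
      lintegral_eq_lintegral_orthogonal_line he (hf.indicator measurableSet_ball)]
    exact lintegral_congr fun y => lintegral_indicator_ball_smul_line he hs c y.2 f
  intro c hc d hd hcd
  simp only [lintegral_slices]
  refine lintegral_mono fun y => ?_
  rcases (Real.sqrt_nonneg (s ^ 2 - ‖(y : E)‖ ^ 2)).eq_or_lt with hh | hh
  · simp [← hh]
  have hhs : √(s ^ 2 - ‖(y : E)‖ ^ 2) ^ 2 + ‖(y : E)‖ ^ 2 = s ^ 2 := by
    rw [Real.sq_sqrt (Real.sqrt_pos.1 hh).le, sub_add_cancel]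
  exact antitoneOn_setLIntegral_Ioc_sub_add hh (fun t ht => hfs t ht _ hh y y.2 hhs) hc hd hcd

end InnerProductSpace

section Annulus

theorem lt_of_sq_add_sq_eq {R Q s t u v : ℝ} (hs : (R + Q) / 2 ≤ s) (hu : 0 ≤ u) (huR : u < R)
    (hRv : R ≤ v) (hst : s - t ≤ u) (huv : u ^ 2 + v ^ 2 = 2 * (t ^ 2 + s ^ 2)) : Q < v := by
  by_contra! hvQ
  have hs2 : ((R + Q) / 2) ^ 2 ≤ s ^ 2 := pow_le_pow_left₀ (by linarith) hs 2
  have hu2 : u ^ 2 < R ^ 2 := pow_lt_pow_left₀ huR hu two_ne_zero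
  have hv2 : v ^ 2 ≤ Q ^ 2 := pow_le_pow_left₀ (by linarith) hvQ 2
  have ht : t < (Q - R) / 2 := lt_of_pow_lt_pow_left₀ 2 (by linarith) (by nlinarith)
  linarith

variable {E : Type*} [NormedAddCommGroup E]

/-- The density of the weighted annulus `W(R,Q,w)` of the paper, with free weights `a` on the open
ball of radius `R` and `b` on the surrounding closed shell of outer radius `Q`. -/
noncomputable def annulusDensity (R Q : ℝ) (a b : ℝ≥0∞) (p : E) : ℝ≥0∞ :=
  if ‖p‖ < R then a else if ‖p‖ ≤ Q then b else 0

variable {R Q : ℝ} {a b : ℝ≥0∞}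

theorem measurable_annulusDensity [MeasurableSpace E] [OpensMeasurableSpace E] :
    Measurable (annulusDensity R Q a b : E → ℝ≥0∞) :=
  .ite (measurableSet_lt measurable_norm measurable_const) measurable_const <|
    .ite (measurableSet_le measurable_norm measurable_const) measurable_const measurable_const

theorem annulusDensity_le_max (p : E) : annulusDensity R Q a b p ≤ max a b := by
  unfold annulusDensity
  split_ifs <;> simp

theorem annulusDensity_le_of_norm_le {p q : E} (hqp : ‖q‖ ≤ ‖p‖)
    (hcross : ‖q‖ < R → R ≤ ‖p‖ → Q < ‖p‖) :
    annulusDensity R Q a b p ≤ annulusDensity R Q a b q := by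
  rcases lt_or_ge ‖p‖ R with hp | hp
  · simp [annulusDensity, hp, hqp.trans_lt hp]
  rcases lt_or_ge ‖q‖ R with hq | hq
  · simp [annulusDensity, hp.not_gt, (hcross hq hp).not_ge]
  by_cases hpQ : ‖p‖ ≤ Q
  · simp [annulusDensity, hp.not_gt, hq.not_gt, hpQ, hqp.trans hpQ]
  · simp [annulusDensity, hp.not_gt, hpQ]

variable [InnerProductSpace ℝ E] {e : E}

theorem annulusDensity_add_smul_le_sub_smul (he : ‖e‖ = 1) {s t h : ℝ}
    (hs : (R + Q) / 2 ≤ s) (ht : 0 ≤ t) (hh : 0 ≤ h) {y : E} (hy : y ∈ (ℝ ∙ e)ᗮ)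
    (hhs : h ^ 2 + ‖y‖ ^ 2 = s ^ 2) :
    annulusDensity R Q a b ((t + h) • e + y) ≤ annulusDensity R Q a b ((t - h) • e + y) := by
  have hfront := norm_smul_add_sq_of_mem_orthogonal he (t + h) hy
  have hback := norm_smul_add_sq_of_mem_orthogonal he (t - h) hy
  have hth : 0 ≤ t * h := mul_nonneg ht hh
  refine annulusDensity_le_of_norm_le
    (le_of_sq_le_sq (by linarith) (norm_nonneg _)) fun hR hRv => ?_
  by_contra! hQ
  have hs0 : 0 ≤ s := by linarith [norm_nonneg ((t - h) • e + y)]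
  have hhs_le : h ≤ s := le_of_sq_le_sq (by linarith [sq_nonneg ‖y‖]) hs0
  have hst : s - t ≤ ‖(t - h) • e + y‖ :=
    le_of_sq_le_sq (by nlinarith [mul_le_mul_of_nonneg_left hhs_le ht]) (norm_nonneg _)
  exact hQ.not_gt <| lt_of_sq_add_sq_eq hs (norm_nonneg _) hR hRv hst (by linarith)

variable [FiniteDimensional ℝ E] [MeasurableSpace E] [BorelSpace E]

theorem antitoneOn_withDensity_annulusDensity_ball (he : ‖e‖ = 1) {s : ℝ}
    (hs : (R + Q) / 2 ≤ s) :
    AntitoneOn (fun c : ℝ => volume.withDensity (annulusDensity R Q a b) (ball (c • e) s))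
      (Ici 0) := by
  simp only [withDensity_apply _ measurableSet_ball]
  exact antitoneOn_setLIntegral_ball_smul he measurable_annulusDensity
    fun t ht h hh y hy hhs => annulusDensity_add_smul_le_sub_smul he hs ht.le hh.le hy hhs

theorem weighted_annulus_nu_large_s_general (he : ‖e‖ = 1) {a b : ℝ≥0} {s : ℝ}
    (hs : (R + Q) / 2 ≤ s) :
    AntitoneOn (fun c : ℝ => (volume.withDensity (annulusDensity R Q a b)).real (ball (c • e) s))
      (Ici 0) := by
  intro c hc d hd hcd
  refine ENNReal.toReal_mono ?_ (antitoneOn_withDensity_annulusDensity_ball he hs hc hd hcd)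
  rw [withDensity_apply _ measurableSet_ball]
  exact (setLIntegral_lt_top_of_le_nnreal measure_ball_lt_top.ne
    ⟨max a b, fun p _ => by simpa only [ENNReal.coe_max] using annulusDensity_le_max p⟩).ne

end Annulus

theorem pc_eq_smul_single (c : ℝ) : pc c = c • EuclideanSpace.single 0 1 := by
  ext i
  fin_cases i <;> simp [pc]

/-- For the weighted annulus measure `μ = W(R,Q,w)` with `a < b`, and
`s ≥ (R + Q)/2`, the function `ν_s(c) = μ(B((c,0),s))` is non-increasing on `[0,Q]`; in
particular it attains its maximum over `[0,Q]` at `c = 0`. -/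
theorem weighted_annulus_nu_large_s
    (R Q w a b : ℝ) (hR : 0 < R) (hRQ : R < Q) (hw0 : 0 < w) (hw1 : w < 1)
    (ha : a = w / (Real.pi * R ^ 2))
    (hb : b = (1 - w) / (Real.pi * (Q ^ 2 - R ^ 2)))
    (hab : a < b)
    (μ : Measure (EuclideanSpace ℝ (Fin 2)))
    (hμ : μ = volume.withDensity (fun p =>
      if ‖p‖ < R then ENNReal.ofReal a else if ‖p‖ ≤ Q then ENNReal.ofReal b else 0))
    (s : ℝ) (hs : (R + Q) / 2 ≤ s)
    (ν : ℝ → ℝ) (hν : ∀ c, ν c = (μ (ball (pc c) s)).toReal) :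
    AntitoneOn ν (Icc (0:ℝ) Q) ∧ ∀ c ∈ Icc (0:ℝ) Q, ν c ≤ ν 0 := by
  have hν_ball : ν = fun c => μ.real (ball (c • EuclideanSpace.single (0 : Fin 2) (1 : ℝ)) s) :=
    funext fun c => by rw [hν, pc_eq_smul_single, Measure.real]
  have hanti : AntitoneOn ν (Ici 0) := by
    rw [hν_ball, hμ]
    exact weighted_annulus_nu_large_s_general (by simp) hs
  exact ⟨hanti.mono Icc_subset_Ici_self, fun c hc => hanti self_mem_Ici hc.1 hc.1⟩
end

section
/- Fix 0 < R < Q and 0 < w < 1, set a = w/(πR²) and b = (1−w)/(π(Q²−R²)), assume a < b, and let μ be the measure on the Euclidean plane with density f with respect to 2-dimensional Lebesgue measure, where f(p) = a if ‖p‖ < R, f(p) = b if R ≤ ‖p‖ ≤ Q, and f(p) = 0 if ‖p‖ > Q. Then for every s > 0 and every k with 0 < k ≤ 1, there exists a closed interval I ⊆ [0,Q] (possibly empty) such that {p ∈ ℝ² : ‖p‖ ≤ Q and μ(B(p,s)) ≥ k} = {p ∈ ℝ² : ‖p‖ ∈ I}. In particular, this superlevel set is either empty or a closed annulus (possibly degenerate)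 centered at the origin. -/
open Set MeasureTheory Metric
open Module (finrank)
open scoped RealInnerProductSpace

/-!
Move a ball of radius `s` outwards along a ray from the origin. Cutting along the radical
hyperplane splits its overlap with the ball of radius `ρ` about the origin into two caps, so the
volume of the overlap decreases at the rate given by the `(d - 1)`-dimensional section
`σ_ρ(t)` of the lens by that hyperplane. The annulus is `b • (ball of radius Q)` minus
`(b - a) • (ball of radius R)`, so the mass of the moving ball has derivative
`(b - a) σ_R(t) - b σ_Q(t)`. Up to a common positive factor, `σ_ρ(t) ^ (2 / (d - 1))` is the
positive part of the Heron polynomial of the triangle with sides `t`, `s`, `ρ`, so comparing the two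
terms means comparing Heron polynomials with weights `A ≤ B`. Their difference is a convex
quadratic in `t ^ 2` which, as soon as the sphere of radius `Q` is met, is nonpositive at `t = Q`.
Hence once the mass starts to decrease it never increases again: it is quasiconcave in `t`, and its
superlevel sets are intervals.
-/

section RealFunctions

theorem quasiconcaveOn_Icc_of_hasDerivAt {f f' : ℝ → ℝ} {a b : ℝ}
    (hf : ContinuousOn f (Icc a b)) (hf' : ∀ x ∈ Ioo a b, HasDerivAt f (f' x) x)
    (hsign : ∀ x ∈ Ioo a b, ∀ y ∈ Ioo a b, x < y → f' x < 0 → f' y ≤ 0) :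
    QuasiconcaveOn ℝ (Icc a b) f := by
  intro r
  refine OrdConnected.convex ⟨?_⟩
  rintro x ⟨hx, hrx⟩ y ⟨hy, hry⟩ z ⟨hxz, hzy⟩
  have haz : a ≤ z := hx.1.trans hxz
  have hzb : z ≤ b := hzy.trans hy.2
  refine ⟨⟨haz, hzb⟩, ?_⟩
  by_contra! hz
  have hxz' : x < z := hxz.lt_of_ne (by rintro rfl; exact hz.not_ge hrx)
  have hzy' : z < y := hzy.lt_of_ne (by rintro rfl; exact hz.not_ge hry)
  obtain ⟨u, hu, hfu⟩ := exists_hasDerivAt_eq_slope f f' hxz'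
    (hf.mono (Icc_subset_Icc hx.1 hzb)) fun w hw ↦ hf' w (Ioo_subset_Ioo hx.1 hzb hw)
  obtain ⟨v, hv, hfv⟩ := exists_hasDerivAt_eq_slope f f' hzy'
    (hf.mono (Icc_subset_Icc haz hy.2)) fun w hw ↦ hf' w (Ioo_subset_Ioo haz hy.2 hw)
  have hu_neg : f' u < 0 := hfu ▸ div_neg_of_neg_of_pos (by linarith) (sub_pos.2 hxz')
  have hv_pos : 0 < f' v := hfv ▸ div_pos (by linarith) (sub_pos.2 hzy')
  exact hv_pos.not_ge <| hsign u (Ioo_subset_Ioo hx.1 hzb hu) v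
    (Ioo_subset_Ioo haz hy.2 hv) (hu.2.trans hv.1) hu_neg

theorem exists_superlevel_eq_Icc {f : ℝ → ℝ} {a b : ℝ} (hf : ContinuousOn f (Icc a b))
    (hq : QuasiconcaveOn ℝ (Icc a b) f) (k : ℝ) :
    ∃ lo hi, {x ∈ Icc a b | k ≤ f x} = Icc lo hi := by
  rcases {x ∈ Icc a b | k ≤ f x}.eq_empty_or_nonempty with hempty | hne
  · exact ⟨1, 0, by rw [hempty, Icc_eq_empty (by norm_num)]⟩
  · have hcompact : IsCompact {x ∈ Icc a b | k ≤ f x} :=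
      isCompact_Icc.of_isClosed_subset
        (hf.preimage_isClosed_of_isClosed isClosed_Icc isClosed_Ici) (sep_subset _ _)
    exact ⟨_, _, eq_Icc_of_connected_compact ⟨hne, (hq k).isPreconnected⟩ hcompact⟩

theorem hasDerivAt_integral_Iic {f : ℝ → ℝ} (hf : Continuous f) (hint : Integrable f) (x : ℝ) :
    HasDerivAt (fun y ↦ ∫ u in Iic y, f u) (f x) x := by
  have hsplit : (fun y ↦ ∫ u in Iic y, f u) =
      fun y ↦ (∫ u in Iic 0, f u) + ∫ u in 0..y, f u := by
    funext y
    rw [← intervalIntegral.integral_Iic_sub_Iic hint.integrableOn hint.integrableOn,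
      add_sub_cancel]
  rw [hsplit]
  exact (hf.integral_hasStrictDerivAt 0 x).hasDerivAt.const_add _

theorem convexOn_quadratic {a : ℝ} (ha : 0 ≤ a) (b c : ℝ) :
    ConvexOn ℝ univ fun x : ℝ ↦ a * x ^ 2 + b * x + c :=
  ((even_two.convexOn_pow.smul ha).add
    (LinearMap.convexOn (b • LinearMap.id) convex_univ)).add_const c

end RealFunctions

section Heron

/-- Sixteen times the squared area of a triangle with sides `√u`, `s`, `ρ`, as a quadratic
polynomial in the squared side `u`; negative when there is no such triangle. -/
def heronPoly (ρ s u : ℝ) : ℝ := 4 * u * s ^ 2 - (u + s ^ 2 - ρ ^ 2) ^ 2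

theorem sq_le_of_heronPoly_pos {ρ s u : ℝ} (hu : u ≤ ρ ^ 2) (hpos : 0 < heronPoly ρ s u) :
    s ^ 2 ≤ 4 * ρ ^ 2 := by
  have hsymm : heronPoly ρ s u = 4 * ρ ^ 2 * s ^ 2 - (ρ ^ 2 + s ^ 2 - u) ^ 2 := by
    rw [heronPoly]; ring
  have hsq : (s ^ 2) ^ 2 ≤ (ρ ^ 2 + s ^ 2 - u) ^ 2 := by
    gcongr
    linarith
  refine le_of_not_gt fun h ↦ ?_
  nlinarith [mul_le_mul_of_nonneg_right h.le (sq_nonneg s)]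

theorem convexOn_heronPoly_sub {A B : ℝ} (hAB : A ≤ B) (R Q s : ℝ) :
    ConvexOn ℝ univ fun u ↦ A * heronPoly R s u - B * heronPoly Q s u := by
  convert convexOn_quadratic (sub_nonneg.2 hAB)
    (2 * A * (s ^ 2 + R ^ 2) - 2 * B * (s ^ 2 + Q ^ 2))
    (B * (s ^ 2 - Q ^ 2) ^ 2 - A * (s ^ 2 - R ^ 2) ^ 2) using 2
  simp only [heronPoly]
  ring

theorem mul_heronPoly_sq_le {A B R Q s : ℝ} (hA : 0 ≤ A) (hAB : A ≤ B) (hRQ : R ^ 2 ≤ Q ^ 2)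
    (hs : s ^ 2 ≤ 4 * Q ^ 2) :
    A * heronPoly R s (Q ^ 2) ≤ B * heronPoly Q s (Q ^ 2) := by
  have hR : heronPoly R s (Q ^ 2) ≤ heronPoly Q s (Q ^ 2) := by
    unfold heronPoly
    gcongr
    linarith [sq_nonneg s]
  have hQ : 0 ≤ heronPoly Q s (Q ^ 2) := by
    calc 0 ≤ s ^ 2 * (4 * Q ^ 2 - s ^ 2) := mul_nonneg (sq_nonneg s) (by linarith)
      _ = heronPoly Q s (Q ^ 2) := by rw [heronPoly]; ring
  exact (mul_le_mul_of_nonneg_left hR hA).trans (mul_le_mul_of_nonneg_right hAB hQ)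

theorem mul_heronPoly_le_of_le {A B R Q s u v : ℝ} (hA : 0 ≤ A) (hAB : A ≤ B)
    (hRQ : R ^ 2 ≤ Q ^ 2) (huv : u ≤ v) (hv : v ≤ Q ^ 2) (hpos : 0 < heronPoly Q s u)
    (hle : A * heronPoly R s u ≤ B * heronPoly Q s u) :
    A * heronPoly R s v ≤ B * heronPoly Q s v := by
  have hend := mul_heronPoly_sq_le hA hAB hRQ (sq_le_of_heronPoly_pos (huv.trans hv) hpos)
  refine sub_nonpos.1 <| ((convexOn_heronPoly_sub hAB R Q s).le_max_of_mem_Icc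
    (mem_univ u) (mem_univ (Q ^ 2)) ⟨huv, hv⟩).trans (max_le ?_ ?_)
  · exact sub_nonpos.2 hle
  · exact sub_nonpos.2 hend

/-- The abscissa of the radical hyperplane (the locus of equal power) of the spheres of radius `ρ`
about the origin and of radius `s` about a point at distance `t`, measured from the origin towards
that point. For `t = 0` it takes the junk value `0`. -/
noncomputable def radicalCoord (ρ s t : ℝ) : ℝ := (t ^ 2 + ρ ^ 2 - s ^ 2) / (2 * t)

/-- The squared radius of the sphere in which the spheres of radius `ρ` about the origin and of
radius `s` about a point at distance `t` meet; negative when they do not meet. -/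
noncomputable def halfChordSq (ρ s t : ℝ) : ℝ := ρ ^ 2 - radicalCoord ρ s t ^ 2

theorem sq_sub_radicalCoord_sub_sq (ρ s : ℝ) {t : ℝ} (ht : t ≠ 0) :
    s ^ 2 - (radicalCoord ρ s t - t) ^ 2 = halfChordSq ρ s t := by
  rw [halfChordSq, radicalCoord]
  field_simp
  ring

theorem halfChordSq_eq_heronPoly_div (ρ s : ℝ) {t : ℝ} (ht : t ≠ 0) :
    halfChordSq ρ s t = heronPoly ρ s (t ^ 2) / (4 * t ^ 2) := by
  rw [halfChordSq, radicalCoord, heronPoly]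
  field_simp
  ring

theorem mul_halfChordSq_le_of_le {A B R Q s t₁ t₂ : ℝ} (hA : 0 ≤ A) (hAB : A ≤ B) (hR : 0 ≤ R)
    (hRQ : R ≤ Q) (ht₁ : 0 < t₁) (ht : t₁ ≤ t₂) (ht₂ : t₂ ≤ Q)
    (hpos : 0 < halfChordSq Q s t₁) (hle : A * halfChordSq R s t₁ ≤ B * halfChordSq Q s t₁) :
    A * halfChordSq R s t₂ ≤ B * halfChordSq Q s t₂ := by
  have ht₂_pos : 0 < t₂ := ht₁.trans_le ht
  simp only [halfChordSq_eq_heronPoly_div _ _ ht₁.ne', ← mul_div_assoc] at hpos hle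
  simp only [halfChordSq_eq_heronPoly_div _ _ ht₂_pos.ne', ← mul_div_assoc]
  rw [div_le_div_iff_of_pos_right (by positivity)] at hle
  rw [div_pos_iff_of_pos_right (by positivity)] at hpos
  have hRQ_sq : R ^ 2 ≤ Q ^ 2 := by gcongr
  have ht_sq : t₁ ^ 2 ≤ t₂ ^ 2 := by gcongr
  have ht₂_sq : t₂ ^ 2 ≤ Q ^ 2 := by gcongr
  gcongr ?_ / _
  exact mul_heronPoly_le_of_le hA hAB hRQ_sq ht_sq ht₂_sq hpos hle

end Heron

theorem continuous_measure_ball {X : Type*} [PseudoMetricSpace X] [MeasurableSpace X]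
    [OpensMeasurableSpace X] {μ : Measure X} [IsFiniteMeasure μ] {r : ℝ}
    (hμ : ∀ x, μ (sphere x r) = 0) : Continuous fun x ↦ μ (ball x r) := by
  refine continuous_iff_continuousAt.2 fun x ↦ ?_
  refine tendsto_measure_of_ae_tendsto_indicator_of_isFiniteMeasure (nhds x)
    measurableSet_ball (fun _ ↦ measurableSet_ball) ?_
  filter_upwards [measure_eq_zero_iff_ae_notMem.1 (hμ x)] with y hy
  have hdist : Filter.Tendsto (fun z ↦ dist y z) (nhds x) (nhds (dist y x)) :=
    tendsto_const_nhds.dist Filter.tendsto_id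
  rcases lt_or_gt_of_ne (mem_sphere.not.1 hy) with hlt | hgt
  · filter_upwards [hdist.eventually_lt_const hlt] with z hz
    exact iff_of_true hz hlt
  · filter_upwards [hdist.eventually_const_lt hgt] with z hz
    exact iff_of_false hz.not_gt hgt.not_gt

section Overlap

variable {E : Type*} [NormedAddCommGroup E] [InnerProductSpace ℝ E] {e : E}

theorem norm_sub_smul_sq_sub_sq (he : ‖e‖ = 1) {t : ℝ} (ht : t ≠ 0) (ρ s : ℝ) (y : E) :
    ‖y - t • e‖ ^ 2 - s ^ 2 = ‖y‖ ^ 2 - ρ ^ 2 + 2 * t * (radicalCoord ρ s t - ⟪e, y⟫) := by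
  rw [norm_sub_sq_real, inner_smul_right, real_inner_comm, norm_smul, he, radicalCoord, mul_one,
    Real.norm_eq_abs, sq_abs]
  field_simp
  ring

theorem ball_inter_ball_inter_inner_le (he : ‖e‖ = 1) {t ρ s : ℝ} (ht : 0 < t) (hρ : 0 ≤ ρ)
    (hs : 0 ≤ s) :
    ball (t • e) s ∩ ball 0 ρ ∩ {y | ⟪e, y⟫ ≤ radicalCoord ρ s t} =
      ball (t • e) s ∩ {y | ⟪e, y⟫ ≤ radicalCoord ρ s t} := by
  ext y
  simp only [mem_inter_iff, mem_ball_iff_norm, sub_zero, mem_ofPred_eq]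
  refine ⟨fun h ↦ ⟨h.1.1, h.2⟩, fun ⟨hy, hside⟩ ↦ ⟨⟨hy, ?_⟩, hside⟩⟩
  rw [← sq_lt_sq₀ (norm_nonneg _) hs] at hy
  rw [← sq_lt_sq₀ (norm_nonneg _) hρ]
  have hpower := norm_sub_smul_sq_sub_sq he ht.ne' ρ s y
  have hgap : 0 ≤ 2 * t * (radicalCoord ρ s t - ⟪e, y⟫) :=
    mul_nonneg (by linarith) (sub_nonneg.2 hside)
  linarith

theorem ball_inter_ball_sdiff_inner_le (he : ‖e‖ = 1) {t ρ s : ℝ} (ht : 0 < t) (hρ : 0 ≤ ρ)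
    (hs : 0 ≤ s) :
    (ball (t • e) s ∩ ball 0 ρ) \ {y | ⟪e, y⟫ ≤ radicalCoord ρ s t} =
      ball 0 ρ \ {y | ⟪e, y⟫ ≤ radicalCoord ρ s t} := by
  ext y
  simp only [mem_sdiff, mem_inter_iff, mem_ball_iff_norm, sub_zero, mem_ofPred_eq]
  refine ⟨fun h ↦ ⟨h.1.2, h.2⟩, fun ⟨hy, hside⟩ ↦ ⟨⟨?_, hy⟩, hside⟩⟩
  rw [← sq_lt_sq₀ (norm_nonneg _) hρ] at hy
  rw [← sq_lt_sq₀ (norm_nonneg _) hs]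
  have hpower := norm_sub_smul_sq_sub_sq he ht.ne' ρ s y
  have hgap : 2 * t * (radicalCoord ρ s t - ⟪e, y⟫) < 0 :=
    mul_neg_of_pos_of_neg (by linarith) (sub_neg.2 (not_le.1 hside))
  linarith

variable [FiniteDimensional ℝ E]

theorem nontrivial_orthogonal_span_singleton (hE : 2 ≤ finrank ℝ E) (he : e ≠ 0) :
    Nontrivial (ℝ ∙ e)ᗮ := by
  have hsum := (ℝ ∙ e).finrank_add_finrank_orthogonal
  rw [finrank_span_singleton he] at hsum
  exact Module.nontrivial_of_finrank_pos (R := ℝ) (by lia)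

variable [MeasurableSpace E] [BorelSpace E]

theorem measurePreserving_smul_add_orthogonal (he : ‖e‖ = 1) :
    MeasurePreserving (fun z : ℝ × (ℝ ∙ e)ᗮ ↦ z.1 • e + (z.2 : E)) := by
  have hspan := ((LinearIsometryEquiv.toSpanUnitSingleton (𝕜 := ℝ) e he).measurePreserving).prod
    (MeasurePreserving.id (volume : Measure (ℝ ∙ e)ᗮ))
  have h := (ℝ ∙ e).orthogonalDecomposition.symm.measurePreserving.comp
    ((WithLp.volume_preserving_toLp (ℝ ∙ e) (ℝ ∙ e)ᗮ).comp hspan)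
  exact h

theorem volume_ball_inter_inner_le (he : ‖e‖ = 1) {r : ℝ} (hr : 0 ≤ r) (x : ℝ) :
    volume (ball (0 : E) r ∩ {y | ⟪e, y⟫ ≤ x}) =
      ∫⁻ u in Iic x, volume (ball (0 : (ℝ ∙ e)ᗮ) √(r ^ 2 - u ^ 2)) := by
  have hmeas : MeasurableSet (ball (0 : E) r ∩ {y | ⟪e, y⟫ ≤ x}) :=
    measurableSet_ball.inter (measurableSet_le (by fun_prop) measurable_const)
  have hmp := measurePreserving_smul_add_orthogonal he
  rw [← hmp.measure_preimage hmeas.nullMeasurableSet, Measure.volume_eq_prod,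
    Measure.prod_apply (hmp.measurable hmeas), ← lintegral_indicator measurableSet_Iic]
  refine lintegral_congr fun u ↦ ?_
  have hinner (y : (ℝ ∙ e)ᗮ) : ⟪e, (y : E)⟫ = 0 :=
    Submodule.mem_orthogonal_singleton_iff_inner_right.1 y.2
  have hnorm (y : (ℝ ∙ e)ᗮ) : ‖u • e + (y : E)‖ ^ 2 = u ^ 2 + ‖y‖ ^ 2 := by
    rw [norm_add_sq_real, inner_smul_left, hinner, norm_smul, he]
    simp
  have hball (y : (ℝ ∙ e)ᗮ) : ‖u • e + (y : E)‖ < r ↔ ‖y‖ < √(r ^ 2 - u ^ 2) := by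
    rw [Real.lt_sqrt (norm_nonneg _), lt_sub_iff_add_lt', ← hnorm, sq_lt_sq₀ (norm_nonneg _) hr]
  by_cases hu : u ∈ Iic x
  · rw [indicator_of_mem hu]
    congr 1
    ext y
    simp [hball, inner_add_right, inner_smul_right, hinner, he, mem_Iic.1 hu]
  · rw [indicator_of_notMem hu, ← measure_empty (μ := (volume : Measure (ℝ ∙ e)ᗮ))]
    congr 1
    ext y
    simpa [inner_add_right, inner_smul_right, hinner, he] using fun _ ↦ not_le.1 hu

/-- The volume of a ball of squared radius `q` in the hyperplane orthogonal to `e`; it is `0` for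
`q ≤ 0`, because `√q = 0` there. -/
noncomputable def sectionVolume (e : E) (q : ℝ) : ℝ :=
  volume.real (ball (0 : (ℝ ∙ e)ᗮ) √q)

/-- The volume of the cap cut off from the ball of radius `r` about the origin by the half-space
of points with `e`-coordinate at most `x`. -/
noncomputable def capVolume (e : E) (r x : ℝ) : ℝ :=
  volume.real (ball (0 : E) r ∩ {y | ⟪e, y⟫ ≤ x})

theorem sectionVolume_eq [Nontrivial (ℝ ∙ e)ᗮ] (q : ℝ) :
    sectionVolume e q =
      √q ^ finrank ℝ (ℝ ∙ e)ᗮ * volume.real (ball (0 : (ℝ ∙ e)ᗮ) 1) := by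
  rw [sectionVolume, measureReal_def, Measure.addHaar_ball _ _ (Real.sqrt_nonneg q),
    ENNReal.toReal_mul, ENNReal.toReal_ofReal (by positivity), measureReal_def]

theorem sectionVolume_of_nonpos {q : ℝ} (hq : q ≤ 0) :
    sectionVolume e q = 0 := by
  simp [sectionVolume, Real.sqrt_eq_zero_of_nonpos hq]

theorem monotone_sectionVolume : Monotone (sectionVolume e) := fun _ _ h ↦
  measureReal_mono (ball_subset_ball (Real.sqrt_le_sqrt h)) measure_ball_lt_top.ne

theorem sectionVolume_sq_mul [Nontrivial (ℝ ∙ e)ᗮ] {c : ℝ} (hc : 0 ≤ c) (q : ℝ) :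
    sectionVolume e (c ^ 2 * q) = c ^ finrank ℝ (ℝ ∙ e)ᗮ * sectionVolume e q := by
  rw [sectionVolume_eq, sectionVolume_eq, Real.sqrt_mul (sq_nonneg c), Real.sqrt_sq hc, mul_pow,
    mul_assoc]

theorem continuous_sectionVolume [Nontrivial (ℝ ∙ e)ᗮ] : Continuous (sectionVolume e) := by
  simp only [funext sectionVolume_eq]
  fun_prop

theorem integrable_sectionVolume_sub_sq [Nontrivial (ℝ ∙ e)ᗮ] {r : ℝ} (hr : 0 ≤ r) :
    Integrable fun u ↦ sectionVolume e (r ^ 2 - u ^ 2) := by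
  refine (continuous_sectionVolume.comp (by fun_prop)).integrable_of_hasCompactSupport
    (.intro (isCompact_Icc (a := -r) (b := r)) fun u hu ↦ sectionVolume_of_nonpos ?_)
  exact sub_nonpos.2 (le_of_not_gt fun h ↦ hu (abs_le.1 (abs_le_of_sq_le_sq h.le hr)))

theorem capVolume_eq_integral (he : ‖e‖ = 1) [Nontrivial (ℝ ∙ e)ᗮ] {r : ℝ} (hr : 0 ≤ r) (x : ℝ) :
    capVolume e r x = ∫ u in Iic x, sectionVolume e (r ^ 2 - u ^ 2) := by
  have hmeas : Measurable fun u ↦ volume (ball (0 : (ℝ ∙ e)ᗮ) √(r ^ 2 - u ^ 2)) := by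
    simp only [Measure.addHaar_ball _ _ (Real.sqrt_nonneg _)]
    fun_prop
  rw [capVolume, measureReal_def, volume_ball_inter_inner_le he hr]
  exact (integral_toReal hmeas.aemeasurable (ae_of_all _ fun _ ↦ measure_ball_lt_top)).symm

theorem hasDerivAt_capVolume [Nontrivial (ℝ ∙ e)ᗮ] (he : ‖e‖ = 1) {r : ℝ} (hr : 0 ≤ r) (x : ℝ) :
    HasDerivAt (capVolume e r) (sectionVolume e (r ^ 2 - x ^ 2)) x := by
  rw [funext (capVolume_eq_integral he hr)]
  exact hasDerivAt_integral_Iic (continuous_sectionVolume.comp (by fun_prop))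
    (integrable_sectionVolume_sub_sq hr) x

theorem volume_real_ball_inter_inner_le (he : ‖e‖ = 1) (t s x : ℝ) :
    volume.real (ball (t • e) s ∩ {y | ⟪e, y⟫ ≤ x}) = capVolume e s (x - t) := by
  rw [capVolume, measureReal_def, measureReal_def, ← measure_preimage_add_right volume (t • e)]
  congr 2
  ext y
  simp [inner_add_right, inner_smul_right, he, le_sub_iff_add_le]

theorem volume_real_ball_inter_ball (he : ‖e‖ = 1) {t ρ s : ℝ} (ht : 0 < t) (hρ : 0 ≤ ρ)
    (hs : 0 ≤ s) :
    volume.real (ball (t • e) s ∩ ball 0 ρ) =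
      capVolume e s (radicalCoord ρ s t - t) +
        (volume.real (ball (0 : E) ρ) - capVolume e ρ (radicalCoord ρ s t)) := by
  have hmeas : MeasurableSet {y : E | ⟪e, y⟫ ≤ radicalCoord ρ s t} :=
    measurableSet_le (by fun_prop) measurable_const
  have hfar : volume.real (ball (0 : E) ρ \ {y | ⟪e, y⟫ ≤ radicalCoord ρ s t}) =
      volume.real (ball (0 : E) ρ) - capVolume e ρ (radicalCoord ρ s t) :=
    eq_sub_of_add_eq' (measureReal_inter_add_sdiff hmeas)
  rw [← measureReal_inter_add_sdiff hmeas, ball_inter_ball_inter_inner_le he ht hρ hs,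
    ball_inter_ball_sdiff_inner_le he ht hρ hs, volume_real_ball_inter_inner_le he t, hfar]

theorem hasDerivAt_volume_real_ball_inter_ball [Nontrivial (ℝ ∙ e)ᗮ] (he : ‖e‖ = 1) {ρ s t : ℝ}
    (hρ : 0 ≤ ρ) (hs : 0 ≤ s) (ht : 0 < t) :
    HasDerivAt (fun t ↦ volume.real (ball (t • e) s ∩ ball 0 ρ))
      (-sectionVolume e (halfChordSq ρ s t)) t := by
  have hcoord : DifferentiableAt ℝ (radicalCoord ρ s) t := by
    unfold radicalCoord
    fun_prop (disch := positivity)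
  have hshift : HasDerivAt (fun u ↦ radicalCoord ρ s u - u) (deriv (radicalCoord ρ s) t - 1) t :=
    hcoord.hasDerivAt.sub (hasDerivAt_id t)
  have hnear := (hasDerivAt_capVolume he hs (radicalCoord ρ s t - t)).comp_of_eq t hshift rfl
  have hfar := (hasDerivAt_capVolume he hρ (radicalCoord ρ s t)).comp t hcoord.hasDerivAt
  rw [sq_sub_radicalCoord_sub_sq ρ s ht.ne'] at hnear
  rw [← halfChordSq] at hfar
  have hsum := hnear.add (hfar.const_sub (volume.real (ball (0 : E) ρ)))
  refine (hsum.congr_of_eventuallyEq ?_).congr_deriv (by ring)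
  filter_upwards [lt_mem_nhds ht] with u hu
  exact volume_real_ball_inter_ball he hu hρ hs

theorem volume_real_ball_inter_ball_eq_of_norm_eq {p q : E} (h : ‖p‖ = ‖q‖) (s ρ : ℝ) :
    volume.real (ball p s ∩ ball 0 ρ) = volume.real (ball q s ∩ ball 0 ρ) := by
  set f := (ℝ ∙ (q - p))ᗮ.reflection
  have hfq : f.symm p = q := f.symm_apply_eq.2 ((Submodule.reflection_sub h.symm).symm)
  rw [← f.measurePreserving.measureReal_preimage
    (measurableSet_ball.inter measurableSet_ball).nullMeasurableSet, preimage_inter,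
    f.preimage_ball, f.preimage_ball, hfq, map_zero]

theorem continuous_volume_real_ball_inter_ball [Nontrivial E] (s ρ : ℝ) :
    Continuous fun p : E ↦ volume.real (ball p s ∩ ball 0 ρ) := by
  have := isFiniteMeasure_restrict.2 (measure_ball_lt_top (μ := volume) (x := (0 : E)) (r := ρ)).ne
  have hnull (p : E) : volume.restrict (ball 0 ρ) (sphere p s) = 0 :=
    Measure.restrict_le_self.absolutelyContinuous (Measure.addHaar_sphere volume p s)
  simp only [← measureReal_restrict_apply measurableSet_ball]
  exact ENNReal.continuousOn_toReal.comp_continuous (continuous_measure_ball hnull)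
    fun p ↦ measure_ne_top _ _

theorem mul_sectionVolume_le_of_lt [Nontrivial (ℝ ∙ e)ᗮ] {b c R Q s t₁ t₂ : ℝ} (hc : 0 ≤ c)
    (hcb : c ≤ b) (hR : 0 ≤ R) (hRQ : R ≤ Q) (ht₁ : 0 < t₁) (ht : t₁ ≤ t₂) (ht₂ : t₂ ≤ Q)
    (hlt : c * sectionVolume e (halfChordSq R s t₁) < b * sectionVolume e (halfChordSq Q s t₁)) :
    c * sectionVolume e (halfChordSq R s t₂) ≤ b * sectionVolume e (halfChordSq Q s t₂) := by
  -- A weight `c ^ (d - 1)` moves inside the monotone function `sectionVolume` as a factor `c ^ 2`.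
  have hroot {x : ℝ} (hx : 0 ≤ x) : ∃ y, 0 ≤ y ∧ y ^ finrank ℝ (ℝ ∙ e)ᗮ = x :=
    ⟨_, Real.rpow_nonneg hx _, Real.rpow_inv_natCast_pow hx Module.finrank_pos.ne'⟩
  obtain ⟨γ, hγ, rfl⟩ := hroot hc
  obtain ⟨β, hβ, rfl⟩ := hroot (hc.trans hcb)
  have hγβ : γ ≤ β := le_of_pow_le_pow_left₀ Module.finrank_pos.ne' hβ hcb
  simp only [← sectionVolume_sq_mul hγ, ← sectionVolume_sq_mul hβ] at hlt ⊢
  have hpos : 0 < β ^ 2 * halfChordSq Q s t₁ := by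
    by_contra! hnonpos
    exact (measureReal_nonneg.trans_lt hlt).ne' (sectionVolume_of_nonpos hnonpos)
  exact monotone_sectionVolume <| mul_halfChordSq_le_of_le (sq_nonneg γ) (by gcongr) hR hRQ ht₁ ht
    ht₂ (pos_of_mul_pos_right hpos (sq_nonneg β)) (monotone_sectionVolume.reflect_lt hlt).le

end Overlap

section WeightedAnnulus

variable {E : Type*} [NormedAddCommGroup E] [InnerProductSpace ℝ E] [FiniteDimensional ℝ E]
  [MeasurableSpace E] [BorelSpace E]

variable (E) in
/-- The measure with density `a` on the open ball of radius `R` about the origin, `b` on the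
closed shell between the radii `R` and `Q`, and `0` elsewhere. Unlike the weighted annulus
`W(R, Q, w)`, it is not normalized to total mass one. -/
noncomputable def weightedAnnulus (R Q a b : ℝ) : Measure E :=
  volume.withDensity fun p ↦
    if ‖p‖ < R then ENNReal.ofReal a else if ‖p‖ ≤ Q then ENNReal.ofReal b else 0

theorem weightedAnnulus_add_restrict_ball [Nontrivial E] {R Q a b : ℝ} (hRQ : R ≤ Q) (ha : 0 ≤ a)
    (hab : a ≤ b) :
    weightedAnnulus E R Q a b + ENNReal.ofReal (b - a) • volume.restrict (ball 0 R) =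
      ENNReal.ofReal b • volume.restrict (ball 0 Q) := by
  simp only [weightedAnnulus, ← withDensity_const]
  rw [← withDensity_indicator measurableSet_ball, ← withDensity_indicator measurableSet_ball,
    ← withDensity_add_right _ (measurable_const.indicator measurableSet_ball)]
  refine withDensity_congr_ae ?_
  filter_upwards [measure_eq_zero_iff_ae_notMem.1 (Measure.addHaar_sphere volume (0 : E) Q)]
    with p hp
  have hpQ : ‖p‖ ≤ Q ↔ ‖p‖ < Q := ⟨fun h ↦ h.lt_of_ne (by simpa using hp), le_of_lt⟩
  by_cases hpR : ‖p‖ < R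
  · simp [hpR, hpR.trans_le hRQ, ← ENNReal.ofReal_add ha (sub_nonneg.2 hab)]
  · simp [hpR, indicator, hpQ]

theorem weightedAnnulus_real [Nontrivial E] {R Q a b : ℝ} (hRQ : R ≤ Q) (ha : 0 ≤ a) (hab : a ≤ b)
    {S : Set E} (hS : MeasurableSet S) :
    (weightedAnnulus E R Q a b).real S =
      b * volume.real (S ∩ ball 0 Q) - (b - a) * volume.real (S ∩ ball 0 R) := by
  have hfin (ρ : ℝ) : volume (S ∩ ball (0 : E) ρ) ≠ ⊤ :=
    measure_ne_top_of_subset inter_subset_right measure_ball_lt_top.ne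
  have hsum := congrArg (fun ν : Measure E ↦ ν S) (weightedAnnulus_add_restrict_ball hRQ ha hab)
  simp only [Measure.add_apply, Measure.smul_apply, smul_eq_mul, Measure.restrict_apply hS] at hsum
  have hsum_real := congrArg ENNReal.toReal hsum
  rw [ENNReal.toReal_add] at hsum_real
  · simp only [ENNReal.toReal_mul, ENNReal.toReal_ofReal, ha.trans hab, sub_nonneg.2 hab]
      at hsum_real
    exact eq_sub_of_add_eq hsum_real
  · refine ne_top_of_le_ne_top ?_ (le_self_add.trans_eq hsum)
    finiteness [hfin Q]
  · finiteness [hfin R]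

theorem weightedAnnulus_real_ball_eq_of_norm_eq [Nontrivial E] {R Q a b : ℝ} (hRQ : R ≤ Q)
    (ha : 0 ≤ a) (hab : a ≤ b) {p q : E} (h : ‖p‖ = ‖q‖) (s : ℝ) :
    (weightedAnnulus E R Q a b).real (ball p s) = (weightedAnnulus E R Q a b).real (ball q s) := by
  simp only [weightedAnnulus_real hRQ ha hab measurableSet_ball,
    volume_real_ball_inter_ball_eq_of_norm_eq h]

theorem continuous_weightedAnnulus_real_ball [Nontrivial E] {R Q a b : ℝ} (hRQ : R ≤ Q)
    (ha : 0 ≤ a) (hab : a ≤ b) (s : ℝ) :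
    Continuous fun p ↦ (weightedAnnulus E R Q a b).real (ball p s) := by
  simp only [weightedAnnulus_real hRQ ha hab measurableSet_ball]
  exact ((continuous_volume_real_ball_inter_ball s Q).const_mul b).sub
    ((continuous_volume_real_ball_inter_ball s R).const_mul (b - a))

theorem hasDerivAt_weightedAnnulus_real_ball {e : E} [Nontrivial (ℝ ∙ e)ᗮ] (he : ‖e‖ = 1)
    {R Q a b s t : ℝ} (hR : 0 ≤ R) (hRQ : R ≤ Q) (ha : 0 ≤ a) (hab : a ≤ b) (hs : 0 ≤ s)
    (ht : 0 < t) :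
    HasDerivAt (fun t : ℝ ↦ (weightedAnnulus E R Q a b).real (ball (t • e) s))
      ((b - a) * sectionVolume e (halfChordSq R s t) - b * sectionVolume e (halfChordSq Q s t))
      t := by
  have : Nontrivial E := (ℝ ∙ e)ᗮ.subtype_injective.nontrivial
  simp only [weightedAnnulus_real hRQ ha hab measurableSet_ball]
  refine (((hasDerivAt_volume_real_ball_inter_ball he (hR.trans hRQ) hs ht).const_mul b).sub
    ((hasDerivAt_volume_real_ball_inter_ball he hR hs ht).const_mul (b - a))).congr_deriv ?_
  ring

theorem quasiconcaveOn_weightedAnnulus_real_ball {e : E} [Nontrivial (ℝ ∙ e)ᗮ] (he : ‖e‖ = 1)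
    {R Q a b s : ℝ} (hR : 0 ≤ R) (hRQ : R ≤ Q) (ha : 0 ≤ a) (hab : a ≤ b) (hs : 0 ≤ s) :
    QuasiconcaveOn ℝ (Icc 0 Q) fun t : ℝ ↦ (weightedAnnulus E R Q a b).real (ball (t • e) s) := by
  have : Nontrivial E := (ℝ ∙ e)ᗮ.subtype_injective.nontrivial
  have hcont : Continuous fun t : ℝ ↦ (weightedAnnulus E R Q a b).real (ball (t • e) s) :=
    (continuous_weightedAnnulus_real_ball hRQ ha hab s).comp (by fun_prop)
  refine quasiconcaveOn_Icc_of_hasDerivAt hcont.continuousOn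
    (fun t ht ↦ hasDerivAt_weightedAnnulus_real_ball he hR hRQ ha hab hs ht.1) ?_
  intro t₁ ht₁ t₂ ht₂ hlt hneg
  exact sub_nonpos.2 <| mul_sectionVolume_le_of_lt (sub_nonneg.2 hab) (sub_le_self b ha) hR hRQ
    ht₁.1 hlt.le ht₂.2.le (sub_neg.1 hneg)

theorem uniform_filtration_stage_is_annulus_general (hE : 2 ≤ finrank ℝ E) {R Q a b s : ℝ}
    (hR : 0 ≤ R) (hRQ : R ≤ Q) (ha : 0 ≤ a) (hab : a ≤ b) (hs : 0 ≤ s) (k : ℝ) :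
    ∃ lo hi : ℝ, Icc lo hi ⊆ Icc 0 Q ∧
      {p : E | ‖p‖ ≤ Q ∧ k ≤ (weightedAnnulus E R Q a b).real (ball p s)} =
        {p : E | ‖p‖ ∈ Icc lo hi} := by
  have : Nontrivial E := Module.nontrivial_of_finrank_pos (R := ℝ) (by lia)
  obtain ⟨e, he⟩ := exists_norm_eq E zero_le_one
  have := nontrivial_orthogonal_span_singleton hE (norm_ne_zero_iff.1 (he ▸ one_ne_zero))
  have hcont : Continuous fun t : ℝ ↦ (weightedAnnulus E R Q a b).real (ball (t • e) s) :=
    (continuous_weightedAnnulus_real_ball hRQ ha hab s).comp (by fun_prop)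
  obtain ⟨lo, hi, hI⟩ := exists_superlevel_eq_Icc hcont.continuousOn
    (quasiconcaveOn_weightedAnnulus_real_ball he hR hRQ ha hab hs) k
  refine ⟨lo, hi, hI ▸ sep_subset _ _, ?_⟩
  ext p
  have hradial : (weightedAnnulus E R Q a b).real (ball p s) =
      (weightedAnnulus E R Q a b).real (ball (‖p‖ • e) s) :=
    weightedAnnulus_real_ball_eq_of_norm_eq hRQ ha hab (by simp [norm_smul, he]) s
  simp [← hI, hradial]

end WeightedAnnulus

/-- For the weighted annulus measure `μ = W(R,Q,w)` with `a < b`, every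
superlevel set `{p | ‖p‖ ≤ Q ∧ μ(B(p,s)) ≥ k}` of the uniform filtration (for `s > 0` and
`0 < k ≤ 1`) is of the form `{p | ‖p‖ ∈ I}` for some closed interval `I ⊆ [0,Q]` (possibly
empty); i.e. it is empty or a (possibly degenerate) closed annulus centred at the origin. -/
theorem uniform_filtration_stage_is_annulus
    (R Q w a b : ℝ) (hR : 0 < R) (hRQ : R < Q) (hw0 : 0 < w) (hw1 : w < 1)
    (ha : a = w / (Real.pi * R ^ 2))
    (hb : b = (1 - w) / (Real.pi * (Q ^ 2 - R ^ 2)))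
    (hab : a < b)
    (μ : Measure (EuclideanSpace ℝ (Fin 2)))
    (hμ : μ = volume.withDensity (fun p =>
      if ‖p‖ < R then ENNReal.ofReal a else if ‖p‖ ≤ Q then ENNReal.ofReal b else 0)) :
    ∀ s : ℝ, 0 < s → ∀ k : ℝ, 0 < k → k ≤ 1 →
      ∃ lo hi : ℝ, Icc lo hi ⊆ Icc 0 Q ∧
        {p : EuclideanSpace ℝ (Fin 2) | ‖p‖ ≤ Q ∧ k ≤ (μ (ball p s)).toReal} =
          {p : EuclideanSpace ℝ (Fin 2) | ‖p‖ ∈ Icc lo hi} := by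
  intro s hs k _ _
  subst hμ
  exact uniform_filtration_stage_is_annulus_general (by simp) hR.le hRQ.le
    (by rw [ha]; positivity) hab.le hs.le k
end
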